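/- For every ε ∈ (0, 1/2] there exists a constant C > 0 (depending only on ε) such that the following holds. Let n, B, B_h ∈ ℕ with B ≥ 2, n ≥ 2B and ε·B ≤ B_h ≤ B/2, and let δ ∈ [0,1]. Let h : {1,...,n} → {1,...,B−B_h} and s : {1,...,n} → {−1,1} be truly random, and let a_1,...,a_n be {0,1}-valued random variables that are mutually independent and independent of (h, s), satisfying Pr[a_j = 1] ≤ δ for every j ∈ {1,...,B_h}. Define f̃_i = 1/i if a_i = 0, and f̃_i = s(i)·Σ_{j=1}^n a_j·1[h(j)=h(i)]·s(j)·(1/j) if a_i = 1. Then (1/H_n)·Σ_{i=1}^n (1/i)·E[|f̃_i − 1/i|] ≤ C·(δ·log B + log(n/B))·(1 + δ·log B)/(B·log n), where H_n = Σ_{i=1}^n 1/i. -/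

import Mathlib

/-- Expectation of a real-valued random variable on a finite probability space
with the uniform distribution. -/
noncomputable def expUnif {Ω : Type*} [Fintype Ω] (X : Ω → ℝ) : ℝ :=
  (∑ ω : Ω, X ω) / (Fintype.card Ω : ℝ)

/-- The sign `±1` encoded by a boolean. -/
def sgn (b : Bool) : ℝ := if b then 1 else -1

/-- Zipfian frequency of the item indexed by `i : Fin n` (representing item `i+1`):
`f_{i+1} = 1/(i+1)`. -/
noncomputable def zipf {n : ℕ} (i : Fin n) : ℝ := ((i : ℝ) + 1)⁻¹

/-- Expectation over mutually independent classification bits `a : Fin n → Bool`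
(with `Pr[a_j = 1] = p j`) together with an independent uniformly random pair
`(h, s)` of hash/sign functions. -/
noncomputable def noisyExp {n m : ℕ} (p : Fin n → ℝ)
    (X : (Fin n → Bool) → (Fin n → Fin m) → (Fin n → Bool) → ℝ) : ℝ :=
  ∑ a : Fin n → Bool,
    (∏ j : Fin n, if a j then p j else 1 - p j) *
      expUnif (fun ω : (Fin n → Fin m) × (Fin n → Bool) => X a ω.1 ω.2)

lemma prodsum2 {n : ℕ} {κ : Type*} [Fintype κ] (w : Fin n → κ → ℝ)
    (hw : ∀ k, ∑ x, w k x = 1) (i j : Fin n) (hij : i ≠ j) (u v : κ → ℝ) :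
    ∑ x : Fin n → κ, (∏ k, w k (x k)) * (u (x i) * v (x j))
      = (∑ y, w i y * u y) * (∑ y, w j y * v y) := by
  classical
  have h1 : ∀ x : Fin n → κ, (∏ k, w k (x k)) * (u (x i) * v (x j))
      = ∏ k, (w k (x k) * ((if k = i then u (x k) else 1) * (if k = j then v (x k) else 1))) := by
    intro x
    rw [Finset.prod_mul_distrib, Finset.prod_mul_distrib]
    simp
  simp_rw [h1]
  have h2 := Finset.prod_univ_sum (fun _ : Fin n => (Finset.univ : Finset κ))
    (fun k y => w k y * ((if k = i then u y else 1) * (if k = j then v y else 1)))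
  rw [Fintype.piFinset_univ] at h2
  rw [← h2]
  have h3 : ∀ k, ∑ y, w k y * ((if k = i then u y else 1) * (if k = j then v y else 1))
      = (if k = i then (∑ y, w i y * u y) else 1) * (if k = j then (∑ y, w j y * v y) else 1) := by
    intro k
    by_cases hi : k = i
    · subst hi
      simp [hij]
    · by_cases hj : k = j
      · subst hj
        simp [hi]
      · simp [hi, hj, hw]
  simp_rw [h3]
  rw [Finset.prod_mul_distrib]
  simp

lemma prodsum1 {n : ℕ} {κ : Type*} [Fintype κ] (w : Fin n → κ → ℝ)
    (hw : ∀ k, ∑ x, w k x = 1) (i : Fin n) (u : κ → ℝ) :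
    ∑ x : Fin n → κ, (∏ k, w k (x k)) * u (x i)
      = (∑ y, w i y * u y) := by
  classical
  have h1 : ∀ x : Fin n → κ, (∏ k, w k (x k)) * u (x i)
      = ∏ k, (w k (x k) * (if k = i then u (x k) else 1)) := by
    intro x
    rw [Finset.prod_mul_distrib]
    simp
  simp_rw [h1]
  have h2 := Finset.prod_univ_sum (fun _ : Fin n => (Finset.univ : Finset κ))
    (fun k y => w k y * (if k = i then u y else 1))
  rw [Fintype.piFinset_univ] at h2
  rw [← h2]
  have h3 : ∀ k, ∑ y, w k y * (if k = i then u y else 1)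
      = (if k = i then (∑ y, w i y * u y) else 1) := by
    intro k
    by_cases hi : k = i
    · subst hi
      simp
    · simp [hi, hw]
  simp_rw [h3]
  simp

lemma expUnif_add {Ω : Type*} [Fintype Ω] (X Y : Ω → ℝ) :
    expUnif (fun ω => X ω + Y ω) = expUnif X + expUnif Y := by
  simp only [expUnif, Finset.sum_add_distrib, add_div]

lemma expUnif_cmul {Ω : Type*} [Fintype Ω] (c : ℝ) (X : Ω → ℝ) :
    expUnif (fun ω => c * X ω) = c * expUnif X := by
  simp only [expUnif, ← Finset.mul_sum, mul_div_assoc]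

lemma expUnif_sum {Ω ι : Type*} [Fintype Ω] (t : Finset ι) (X : ι → Ω → ℝ) :
    expUnif (fun ω => ∑ j ∈ t, X j ω) = ∑ j ∈ t, expUnif (X j) := by
  simp only [expUnif]
  rw [Finset.sum_comm, Finset.sum_div]

lemma expUnif_mono {Ω : Type*} [Fintype Ω] (X Y : Ω → ℝ) (h : ∀ ω, X ω ≤ Y ω) :
    expUnif X ≤ expUnif Y := by
  simp only [expUnif]
  gcongr with ω
  exact h ω

lemma expUnif_const {Ω : Type*} [Fintype Ω] [Nonempty Ω] (c : ℝ) :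
    expUnif (fun _ : Ω => c) = c := by
  simp [expUnif]

lemma expUnif_prod {Ω₁ Ω₂ : Type*} [Fintype Ω₁] [Fintype Ω₂] (u : Ω₁ → ℝ) (v : Ω₂ → ℝ) :
    expUnif (fun ω : Ω₁ × Ω₂ => u ω.1 * v ω.2) = expUnif u * expUnif v := by
  simp only [expUnif, Fintype.sum_prod_type, Fintype.card_prod, Nat.cast_mul,
    div_mul_div_comm, Finset.sum_mul_sum]

lemma expUnif_pi2 {n : ℕ} {κ : Type*} [Fintype κ] [Nonempty κ] (i j : Fin n) (hij : i ≠ j)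
    (u v : κ → ℝ) :
    expUnif (fun x : Fin n → κ => u (x i) * v (x j)) = expUnif u * expUnif v := by
  have hc : (Fintype.card κ : ℝ) ≠ 0 := by simp
  have h := prodsum2 (n := n) (fun _ (_ : κ) => (Fintype.card κ : ℝ)⁻¹)
    (by intro k; simp) i j hij u v
  simp only [Finset.prod_const, Finset.card_univ, Fintype.card_fin, ← Finset.mul_sum] at h
  simp only [expUnif, Fintype.card_pi, Finset.prod_const, Finset.card_univ, Fintype.card_fin,
    Nat.cast_pow]
  rw [div_eq_inv_mul, div_eq_inv_mul, div_eq_inv_mul, ← inv_pow]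
  exact h

lemma exp_hash {n m : ℕ} [NeZero m] (i j : Fin n) (hij : j ≠ i) :
    expUnif (fun h : Fin n → Fin m => if h j = h i then (1 : ℝ) else 0) = 1 / m := by
  have h1 : (fun h : Fin n → Fin m => if h j = h i then (1 : ℝ) else 0)
      = fun h => ∑ v : Fin m, (if h j = v then (1 : ℝ) else 0) * (if h i = v then (1 : ℝ) else 0) := by
    funext h
    simp [eq_comm]
  rw [h1, expUnif_sum]
  have h2 : ∀ v : Fin m, expUnif (fun h : Fin n → Fin m =>
      (if h j = v then (1 : ℝ) else 0) * (if h i = v then (1 : ℝ) else 0)) = 1 / m * (1 / m) := by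
    intro v
    rw [expUnif_pi2 j i hij (fun x => if x = v then (1 : ℝ) else 0)
      (fun x => if x = v then (1 : ℝ) else 0)]
    simp [expUnif]
  simp_rw [h2]
  have : (m : ℝ) ≠ 0 := NeZero.ne _
  simp [this]

lemma exp_sgn {n : ℕ} (i j : Fin n) (hij : i ≠ j) :
    expUnif (fun s : Fin n → Bool => sgn (s i) * sgn (s j)) = 0 := by
  rw [expUnif_pi2 i j hij sgn sgn]
  simp [expUnif, sgn]

lemma sgn_sq (b : Bool) : sgn b * sgn b = 1 := by
  cases b <;> simp [sgn]

lemma abs_sgn (b : Bool) : |sgn b| = 1 := by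
  cases b <;> simp [sgn]

lemma zipf_pos {n : ℕ} (i : Fin n) : 0 < zipf i := by
  unfold zipf; positivity

/-- second moment of the light part -/
lemma light_sq {n m : ℕ} [NeZero m] (a : Fin n → Bool) (i : Fin n) (t : Finset (Fin n))
    (ht : i ∉ t) :
    expUnif (fun ω : (Fin n → Fin m) × (Fin n → Bool) =>
      (∑ j ∈ t, if a j = true ∧ ω.1 j = ω.1 i then sgn (ω.2 j) * zipf j else 0) ^ 2)
      ≤ (∑ j ∈ t, zipf j ^ 2) / m := by
  have h1 : ∀ ω : (Fin n → Fin m) × (Fin n → Bool),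
      (∑ j ∈ t, if a j = true ∧ ω.1 j = ω.1 i then sgn (ω.2 j) * zipf j else 0) ^ 2
      = ∑ j ∈ t, ∑ k ∈ t, (zipf j * zipf k) *
        ((if (a j = true ∧ ω.1 j = ω.1 i) ∧ (a k = true ∧ ω.1 k = ω.1 i) then (1 : ℝ) else 0) *
          (sgn (ω.2 j) * sgn (ω.2 k))) := by
    intro ω
    rw [sq, Finset.sum_mul_sum]
    refine Finset.sum_congr rfl fun j _ => Finset.sum_congr rfl fun k _ => ?_
    by_cases h1 : (a j = true ∧ ω.1 j = ω.1 i) <;> by_cases h2 : (a k = true ∧ ω.1 k = ω.1 i)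
    · rw [if_pos h1, if_pos h2, if_pos (And.intro h1 h2)]; ring
    · rw [if_neg h2, if_neg (fun h : (a j = true ∧ ω.1 j = ω.1 i) ∧ (a k = true ∧ ω.1 k = ω.1 i) => h2 h.2)]; ring
    · rw [if_neg h1, if_neg (fun h : (a j = true ∧ ω.1 j = ω.1 i) ∧ (a k = true ∧ ω.1 k = ω.1 i) => h1 h.1)]; ring
    · rw [if_neg h1, if_neg (fun h : (a j = true ∧ ω.1 j = ω.1 i) ∧ (a k = true ∧ ω.1 k = ω.1 i) => h1 h.1)]; ring
  simp_rw [h1]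
  rw [expUnif_sum, Finset.sum_div]
  refine Finset.sum_le_sum fun j hj => ?_
  rw [expUnif_sum]
  have hji : j ≠ i := fun h => ht (h ▸ hj)
  have h2 : ∀ k ∈ t, k ≠ j → expUnif (fun ω : (Fin n → Fin m) × (Fin n → Bool) =>
      (zipf j * zipf k) *
        ((if (a j = true ∧ ω.1 j = ω.1 i) ∧ (a k = true ∧ ω.1 k = ω.1 i) then (1 : ℝ) else 0) *
          (sgn (ω.2 j) * sgn (ω.2 k)))) = 0 := by
    intro k _ hk
    rw [expUnif_cmul, expUnif_prod (fun h : Fin n → Fin m =>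
      if (a j = true ∧ h j = h i) ∧ (a k = true ∧ h k = h i) then (1 : ℝ) else 0)
      (fun s : Fin n → Bool => sgn (s j) * sgn (s k)), exp_sgn j k hk.symm]
    simp
  rw [Finset.sum_eq_single_of_mem j hj h2, expUnif_cmul, ← sq]
  rw [div_eq_mul_one_div, ← exp_hash (m := m) i j hji]
  refine mul_le_mul_of_nonneg_left ?_ (sq_nonneg _)
  have h3 := expUnif_prod (fun h : Fin n → Fin m => if h j = h i then (1 : ℝ) else 0)
    (fun _ : Fin n → Bool => (1 : ℝ))
  rw [expUnif_const, mul_one] at h3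
  rw [← h3]
  apply expUnif_mono
  intro ω
  simp only [sgn_sq, mul_one]
  by_cases h : ω.1 j = ω.1 i
  · simp only [h]; split_ifs <;> simp
  · simp [h]

lemma fixed_a {n m : ℕ} [NeZero m] (a : Fin n → Bool) (i : Fin n) (Bh : ℕ) (b : ℝ) (hb : 0 < b) :
    expUnif (fun ω : (Fin n → Fin m) × (Fin n → Bool) =>
      |(if a i then
          sgn (ω.2 i) * ∑ j : Fin n,
            if a j = true ∧ ω.1 j = ω.1 i then sgn (ω.2 j) * zipf j else 0
        else zipf i) - zipf i|) ≤
    if a i then (∑ j ∈ Finset.univ.filter (fun j : Fin n => (j : ℕ) < Bh ∧ j ≠ i),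
        (if a j then zipf j * (1 / m) else 0)) +
      (b / 2 * ((∑ j ∈ Finset.univ.filter (fun j : Fin n => ¬ (j : ℕ) < Bh), zipf j ^ 2) / m)
        + 1 / b / 2)
    else 0 := by
  by_cases hai : a i = true
  swap
  · simp [hai, expUnif]
  simp only [hai, if_true]
  set H := Finset.univ.filter (fun j : Fin n => (j : ℕ) < Bh ∧ j ≠ i) with hH
  set L := Finset.univ.filter (fun j : Fin n => ¬ (j : ℕ) < Bh ∧ j ≠ i) with hL
  have hpt : ∀ ω : (Fin n → Fin m) × (Fin n → Bool),
      |sgn (ω.2 i) * (∑ j : Fin n,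
            if a j = true ∧ ω.1 j = ω.1 i then sgn (ω.2 j) * zipf j else 0) - zipf i|
      ≤ (∑ j ∈ H, (if a j then zipf j else 0) * (if ω.1 j = ω.1 i then 1 else 0))
        + (b / 2 * (∑ j ∈ L, if a j = true ∧ ω.1 j = ω.1 i then sgn (ω.2 j) * zipf j else 0) ^ 2
          + 1 / b / 2) := by
    intro ω
    set c : Fin n → ℝ := fun j => if a j = true ∧ ω.1 j = ω.1 i then sgn (ω.2 j) * zipf j else 0
      with hc
    have hsplit : ∑ j, c j = c i + (∑ j ∈ H, c j + ∑ j ∈ L, c j) := by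
      rw [← Finset.add_sum_erase _ _ (Finset.mem_univ i)]
      congr 1
      rw [← Finset.sum_filter_add_sum_filter_not (Finset.univ.erase i) (fun j : Fin n => (j : ℕ) < Bh)]
      congr 1 <;> refine Finset.sum_congr ?_ (fun _ _ => rfl) <;> ext j <;>
        simp [hH, hL, and_comm]
    have hci : c i = sgn (ω.2 i) * zipf i := by simp [hc, hai]
    have heq : sgn (ω.2 i) * (∑ j, c j) - zipf i
        = sgn (ω.2 i) * (∑ j ∈ H, c j + ∑ j ∈ L, c j) := by
      rw [hsplit, hci]
      linear_combination zipf i * sgn_sq (ω.2 i)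
    rw [heq, abs_mul, abs_sgn, one_mul]
    refine (abs_add_le _ _).trans (add_le_add ?_ ?_)
    · refine (Finset.abs_sum_le_sum_abs _ _).trans (Finset.sum_le_sum fun j _ => ?_)
      by_cases h1 : a j = true <;> by_cases h2 : ω.1 j = ω.1 i <;>
        simp [hc, h1, h2, abs_mul, abs_sgn, abs_of_pos (zipf_pos j)]
    · set y := ∑ j ∈ L, c j
      have h0 : 0 ≤ (b * |y| - 1) ^ 2 / (2 * b) := by positivity
      have h1 : (b * |y| - 1) ^ 2 / (2 * b) = b / 2 * y ^ 2 + 1 / b / 2 - |y| := by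
        rw [← sq_abs y]; field_simp; ring
      linarith
  refine (expUnif_mono _ _ hpt).trans ?_
  rw [expUnif_add, expUnif_add, expUnif_cmul, expUnif_const, expUnif_sum]
  have hi : i ∉ L := by simp [hL]
  refine add_le_add (Finset.sum_le_sum fun j hj => ?_) (add_le_add ?_ le_rfl)
  · rw [expUnif_cmul]
    have hji : j ≠ i := by simp [hH] at hj; exact hj.2
    have h3 := expUnif_prod (fun h : Fin n → Fin m => if h j = h i then (1 : ℝ) else 0)
      (fun _ : Fin n → Bool => (1 : ℝ))
    rw [expUnif_const, mul_one] at h3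
    simp only [mul_one] at h3
    rw [h3, exp_hash i j hji]
    split_ifs <;> simp
  · refine mul_le_mul_of_nonneg_left ((light_sq a i L hi).trans ?_) (by positivity)
    refine div_le_div_of_nonneg_right ?_ (by positivity)
    refine Finset.sum_le_sum_of_subset_of_nonneg ?_ (fun _ _ _ => sq_nonneg _)
    intro j; simp [hL]; tauto

lemma bern_sum (q : ℝ) (u : Bool → ℝ) :
    ∑ y : Bool, (if y then q else 1 - q) * u y = q * u true + (1 - q) * u false := by
  simp

lemma noisy_le {n m : ℕ} [NeZero m] (p : Fin n → ℝ) (hp0 : ∀ j, 0 ≤ p j) (hp1 : ∀ j, p j ≤ 1)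
    (i : Fin n) (Bh : ℕ) (b : ℝ) (hb : 0 < b) :
    noisyExp (m := m) p (fun a h s =>
      |(if a i then
          sgn (s i) * ∑ j : Fin n,
            if a j = true ∧ h j = h i then sgn (s j) * zipf j else 0
        else zipf i) - zipf i|) ≤
    p i * ((∑ j ∈ Finset.univ.filter (fun j : Fin n => (j : ℕ) < Bh),
        zipf j * p j) * (1 / m) +
      (b / 2 * ((∑ j ∈ Finset.univ.filter (fun j : Fin n => ¬ (j : ℕ) < Bh), zipf j ^ 2) / m)
        + 1 / b / 2)) := by
  set K := (b / 2 * ((∑ j ∈ Finset.univ.filter (fun j : Fin n => ¬ (j : ℕ) < Bh), zipf j ^ 2) / m)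
        + 1 / b / 2) with hK
  unfold noisyExp
  have hW : ∀ a : Fin n → Bool, 0 ≤ ∏ j : Fin n, if a j then p j else 1 - p j := by
    intro a
    refine Finset.prod_nonneg fun j _ => ?_
    split_ifs
    · exact hp0 j
    · linarith [hp1 j]
  refine (Finset.sum_le_sum fun a _ => mul_le_mul_of_nonneg_left (fixed_a a i Bh b hb) (hW a)).trans ?_
  rw [← hK]
  set H := Finset.univ.filter (fun j : Fin n => (j : ℕ) < Bh ∧ j ≠ i) with hH
  let w : Fin n → Bool → ℝ := fun j y => if y then p j else 1 - p j
  have hw : ∀ k, ∑ y, w k y = 1 := by intro k; simp [w]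
  let e : Bool → ℝ := fun y => if y then 1 else 0
  have hmarg : ∀ k, ∑ y, w k y * e y = p k := by intro k; simp [w, e]
  have hre : ∀ a : Fin n → Bool, (∏ j : Fin n, if a j then p j else 1 - p j) *
      (if a i then (∑ j ∈ H, (if a j then zipf j * (1 / (m : ℝ)) else 0)) + K else 0)
      = (∑ j ∈ H, zipf j * (1 / (m : ℝ)) * ((∏ k, w k (a k)) * (e (a i) * e (a j))))
        + K * ((∏ k, w k (a k)) * e (a i)) := by
    intro a
    by_cases h : a i = true
    · simp only [h, if_true, w, e]
      rw [mul_add, Finset.mul_sum]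
      congr 1
      · refine Finset.sum_congr rfl fun j _ => ?_
        by_cases h2 : a j = true
        · simp [h2]; ring
        · simp [h2]
      · ring
    · simp [h, e]
  simp_rw [hre]
  rw [Finset.sum_add_distrib, Finset.sum_comm, ← Finset.mul_sum, prodsum1 w hw i e, hmarg]
  have h2 : ∀ j ∈ H, ∑ a : Fin n → Bool,
      zipf j * (1 / (m : ℝ)) * ((∏ k, w k (a k)) * (e (a i) * e (a j)))
      = p i * (zipf j * p j * (1 / m)) := by
    intro j hj
    have hji : j ≠ i := by simp [hH] at hj; exact hj.2
    rw [← Finset.mul_sum, prodsum2 w hw i j hji.symm e e, hmarg, hmarg]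
    ring
  rw [Finset.sum_congr rfl h2, ← Finset.mul_sum, mul_add, mul_comm K]
  refine add_le_add (mul_le_mul_of_nonneg_left ?_ (hp0 i)) le_rfl
  rw [← Finset.sum_mul]
  refine mul_le_mul_of_nonneg_right ?_ (by positivity)
  refine Finset.sum_le_sum_of_subset_of_nonneg ?_
    (fun j _ _ => mul_nonneg (zipf_pos j).le (hp0 j))
  intro j; simp [hH]; tauto

lemma light_sq_sum (n Bh : ℕ) (hB : 1 ≤ Bh) (hn : Bh ≤ n) :
    ∑ j ∈ Finset.univ.filter (fun j : Fin n => ¬ (j : ℕ) < Bh), zipf j ^ 2 ≤ 1 / (Bh : ℝ) := by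
  have key : ∀ N : ℕ, Bh ≤ N → ∑ j ∈ Finset.range N,
      (if ¬ j < Bh then (((j : ℝ) + 1)⁻¹) ^ 2 else 0) ≤ 1 / (Bh : ℝ) - 1 / N := by
    intro N hN
    induction N, hN using Nat.le_induction with
    | base =>
      rw [sub_self, Finset.sum_eq_zero]
      intro j hj
      simp [Finset.mem_range.1 hj]
    | succ N hN ih =>
      rw [Finset.sum_range_succ, if_pos (by omega)]
      have hN0 : (0 : ℝ) < N := by exact_mod_cast (by omega : 0 < N)
      have : (((N : ℝ) + 1)⁻¹) ^ 2 ≤ 1 / N - 1 / (N + 1 : ℝ) := by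
        rw [div_sub_div _ _ hN0.ne' (by positivity), inv_pow, inv_eq_one_div,
          div_le_div_iff₀ (by positivity) (by positivity)]
        nlinarith
      push_cast
      linarith
  rw [Finset.sum_filter]
  have := Fin.sum_univ_eq_sum_range
    (fun j : ℕ => if ¬ j < Bh then (((j : ℝ) + 1)⁻¹) ^ 2 else 0) n
  simp only [zipf]
  rw [this]
  refine (key n hn).trans ?_
  have : (0 : ℝ) ≤ 1 / n := by positivity
  linarith

lemma light_sum (n Bh : ℕ) (hB : 1 ≤ Bh) (hn : Bh ≤ n) :
    ∑ j ∈ Finset.univ.filter (fun j : Fin n => ¬ (j : ℕ) < Bh), zipf j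
      ≤ Real.log n - Real.log Bh := by
  have key : ∀ N : ℕ, Bh ≤ N → ∑ j ∈ Finset.range N,
      (if ¬ j < Bh then (((j : ℝ) + 1)⁻¹) else 0) ≤ Real.log N - Real.log Bh := by
    intro N hN
    induction N, hN using Nat.le_induction with
    | base =>
      rw [sub_self, Finset.sum_eq_zero]
      intro j hj
      simp [Finset.mem_range.1 hj]
    | succ N hN ih =>
      rw [Finset.sum_range_succ, if_pos (by omega)]
      have hN0 : (0 : ℝ) < N := by exact_mod_cast (by omega : 0 < N)
      have h1 : (((N : ℝ) + 1)⁻¹) ≤ Real.log (N + 1) - Real.log N := by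
        have h2 := Real.log_le_sub_one_of_pos (show (0 : ℝ) < N / (N + 1) by positivity)
        rw [Real.log_div hN0.ne' (by positivity)] at h2
        have h3 : (N : ℝ) / (N + 1) - 1 = - ((N : ℝ) + 1)⁻¹ := by field_simp; ring
        linarith
      push_cast
      linarith
  rw [Finset.sum_filter]
  have := Fin.sum_univ_eq_sum_range
    (fun j : ℕ => if ¬ j < Bh then (((j : ℝ) + 1)⁻¹) else 0) n
  simp only [zipf]
  rw [this]
  exact key n hn

lemma harm_eq (n : ℕ) : ∑ j ∈ Finset.range n, (((j : ℝ) + 1)⁻¹) = (harmonic n : ℝ) := by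
  simp [harmonic]

lemma heavy_sum (n Bh : ℕ) (hn : Bh ≤ n) :
    ∑ j ∈ Finset.univ.filter (fun j : Fin n => (j : ℕ) < Bh), zipf j
      ≤ 1 + Real.log Bh := by
  rw [Finset.sum_filter]
  have := Fin.sum_univ_eq_sum_range
    (fun j : ℕ => if j < Bh then (((j : ℝ) + 1)⁻¹) else 0) n
  simp only [zipf]
  rw [this, ← Finset.sum_filter]
  have h2 : (Finset.range n).filter (fun j => j < Bh) = Finset.range Bh := by
    ext j; simp; omega
  rw [h2, harm_eq]
  exact harmonic_le_one_add_log Bh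

lemma log_le_H (n : ℕ) (hn : 1 ≤ n) : Real.log n ≤ ∑ i : Fin n, zipf i := by
  have := Fin.sum_univ_eq_sum_range (fun j : ℕ => (((j : ℝ) + 1)⁻¹)) n
  simp only [zipf]
  rw [this, harm_eq]
  refine le_trans ?_ (log_add_one_le_harmonic n)
  exact Real.log_le_log (by exact_mod_cast hn) (by push_cast; linarith)

/-- learned Count-Sketch with one row, using a noisy heavy hitter
oracle that misclassifies each of the `Bh` heavy items with probability at most `δ`,
incurs expected (query-weighted) error
`O((δ·log B + log(n/B))·(1 + δ·log B)/(B·log n))`. -/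
theorem learned_countSketch_noisy_oracle :
    ∀ ε : ℝ, 0 < ε → ε ≤ 1 / 2 →
      ∃ C : ℝ, 0 < C ∧
        ∀ n B Bh : ℕ, 2 ≤ B → 2 * B ≤ n → ε * (B : ℝ) ≤ (Bh : ℝ) → 2 * Bh ≤ B →
          ∀ δ : ℝ, 0 ≤ δ → δ ≤ 1 →
            ∀ p : Fin n → ℝ, (∀ j, 0 ≤ p j) → (∀ j, p j ≤ 1) →
              (∀ j : Fin n, (j : ℕ) < Bh → p j ≤ δ) →
              (1 / ∑ i : Fin n, zipf i) *
                  (∑ i : Fin n, zipf i *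
                    noisyExp (m := B - Bh) p (fun a h s =>
                      |(if a i then
                          sgn (s i) * ∑ j : Fin n,
                            if a j = true ∧ h j = h i then sgn (s j) * zipf j else 0
                        else zipf i) - zipf i|)) ≤
                C * (δ * Real.log (B : ℝ) + Real.log ((n : ℝ) / (B : ℝ))) *
                  (1 + δ * Real.log (B : ℝ)) / ((B : ℝ) * Real.log (n : ℝ)) := by
  intro ε hε hε2
  refine ⟨(3 + 2 / ε) * (3 + 1 / ε), by positivity, ?_⟩
  intro n B Bh hB hn hεB hBh δ hδ0 hδ1 p hp0 hp1 hpδ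
  have hB0 : (0 : ℝ) < B := by exact_mod_cast (by omega : 0 < B)
  have hBh0 : (0 : ℝ) < Bh := lt_of_lt_of_le (by positivity) hεB
  have hBh1 : 1 ≤ Bh := by exact_mod_cast hBh0
  have hBhn : Bh ≤ n := by omega
  have hn0 : (0 : ℝ) < n := by exact_mod_cast (by omega : 0 < n)
  have : NeZero (B - Bh) := ⟨by omega⟩
  have hm : (B : ℝ) / 2 ≤ ((B - Bh : ℕ) : ℝ) := by
    rw [Nat.cast_sub (by omega)]
    have : (2 : ℝ) * Bh ≤ B := by exact_mod_cast hBh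
    linarith
  set m : ℕ := B - Bh with hmdef
  have hm0 : (0 : ℝ) < m := by linarith
  set T := ∑ j ∈ Finset.univ.filter (fun j : Fin n => ¬ (j : ℕ) < Bh), zipf j ^ 2 with hT
  set Hp := ∑ j ∈ Finset.univ.filter (fun j : Fin n => (j : ℕ) < Bh), zipf j * p j with hHp
  set Q := Hp * (1 / m) + ((B : ℝ) / 2 * (T / m) + 1 / (B : ℝ) / 2) with hQ
  set L := Real.log B with hL
  set R := Real.log ((n : ℝ) / B) with hR
  have hL0 : 0 ≤ L := Real.log_nonneg (by exact_mod_cast (by omega : 1 ≤ B))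
  have hR1 : 1 / 2 ≤ R := by
    have h2 : (2 : ℝ) ≤ n / B := by
      rw [le_div_iff₀ hB0]; exact_mod_cast hn
    have := Real.log_le_log (by norm_num) h2
    have := Real.log_two_gt_d9
    linarith
  have hRe : R = Real.log n - L := Real.log_div hn0.ne' hB0.ne'
  have hlogBh : Real.log Bh ≤ L :=
    Real.log_le_log hBh0 (by exact_mod_cast (by omega : Bh ≤ B))
  have hlogBh2 : L - Real.log Bh ≤ 1 / ε := by
    rw [hL, ← Real.log_div hB0.ne' hBh0.ne']
    refine (Real.log_le_self (by positivity)).trans ?_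
    rw [div_le_div_iff₀ hBh0 hε]; linarith
  have hHpb : Hp ≤ δ * (1 + L) := by
    have h1 : Hp ≤ ∑ j ∈ Finset.univ.filter (fun j : Fin n => (j : ℕ) < Bh), zipf j * δ := by
      refine Finset.sum_le_sum fun j hj => mul_le_mul_of_nonneg_left (hpδ j ?_) (zipf_pos j).le
      simpa using hj
    rw [← Finset.sum_mul] at h1
    have h2 := heavy_sum n Bh hBhn
    nlinarith
  have hHp0 : 0 ≤ Hp := Finset.sum_nonneg fun j _ => mul_nonneg (zipf_pos j).le (hp0 j)
  have hT0 : 0 ≤ T := Finset.sum_nonneg fun j _ => sq_nonneg _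
  have hTb : T ≤ 1 / (ε * B) :=
    (light_sq_sum n Bh hBh1 hBhn).trans (one_div_le_one_div_of_le (by positivity) hεB)
  have hminv : 1 / (m : ℝ) ≤ 2 / B := by
    rw [div_le_div_iff₀ hm0 hB0]; linarith
  have hQ0 : 0 ≤ Q := by positivity
  have hδL : 0 ≤ δ * L := mul_nonneg hδ0 hL0
  have hQb : Q ≤ (3 + 1 / ε) * (1 + δ * L) / B := by
    have h1 : Hp * (1 / m) ≤ δ * (1 + L) * (2 / B) := by gcongr
    have h2 : (B : ℝ) / 2 * (T / m) ≤ B / 2 * (1 / (ε * B) * (2 / B)) := by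
      rw [div_eq_mul_one_div T]; gcongr
    have h3 : Q ≤ (2 * δ * (1 + L) + 1 / ε + 1 / 2) / B := by
      have : δ * (1 + L) * (2 / B) + (B / 2 * (1 / (ε * B) * (2 / B)) + 1 / (B : ℝ) / 2)
        = (2 * δ * (1 + L) + 1 / ε + 1 / 2) / B := by field_simp; ring
      linarith
    refine h3.trans (div_le_div_of_nonneg_right ?_ hB0.le)
    have : 0 ≤ 1 / ε * (δ * L) := by positivity
    nlinarith
  set S := ∑ i : Fin n, zipf i * p i with hS
  have hSb : S ≤ (3 + 2 / ε) * (δ * L + R) := by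
    have h1 : S = Hp + ∑ j ∈ Finset.univ.filter (fun j : Fin n => ¬ (j : ℕ) < Bh), zipf j * p j :=
      (Finset.sum_filter_add_sum_filter_not _ _ _).symm
    have h2 : ∑ j ∈ Finset.univ.filter (fun j : Fin n => ¬ (j : ℕ) < Bh), zipf j * p j
        ≤ ∑ j ∈ Finset.univ.filter (fun j : Fin n => ¬ (j : ℕ) < Bh), zipf j :=
      Finset.sum_le_sum fun j _ => mul_le_of_le_one_right (zipf_pos j).le (hp1 j)
    have h3 := light_sum n Bh hBh1 hBhn
    have h4 : 1 / ε ≤ 2 / ε * R := by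
      have : 2 / ε * (1 / 2) ≤ 2 / ε * R := mul_le_mul_of_nonneg_left hR1 (by positivity)
      have h5 : 2 / ε * (1 / 2) = 1 / ε := by ring
      linarith
    have h5 : 0 ≤ 2 / ε * (δ * L) := by positivity
    nlinarith
  have hlogn : 0 < Real.log n := by
    apply Real.log_pos
    exact_mod_cast (by omega : 1 < n)
  have hH := log_le_H n (by omega)
  have hmain : (∑ i : Fin n, zipf i *
                    noisyExp (m := m) p (fun a h s =>
                      |(if a i then
                          sgn (s i) * ∑ j : Fin n,
                            if a j = true ∧ h j = h i then sgn (s j) * zipf j else 0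
                        else zipf i) - zipf i|)) ≤ S * Q := by
    rw [hS, Finset.sum_mul]
    refine Finset.sum_le_sum fun i _ => ?_
    rw [mul_assoc]
    exact mul_le_mul_of_nonneg_left (noisy_le p hp0 hp1 i Bh B hB0) (zipf_pos i).le
  have hSQ : S * Q ≤ ((3 + 2 / ε) * (δ * L + R)) * ((3 + 1 / ε) * (1 + δ * L) / B) :=
    mul_le_mul hSb hQb hQ0 (by positivity)
  have hfin : 1 / Real.log n * (((3 + 2 / ε) * (δ * L + R)) * ((3 + 1 / ε) * (1 + δ * L) / B))
      = (3 + 2 / ε) * (3 + 1 / ε) * (δ * L + R) * (1 + δ * L) / (B * Real.log n) := by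
    field_simp
  rw [← hfin]
  calc _ ≤ (1 / ∑ i : Fin n, zipf i) *
        (((3 + 2 / ε) * (δ * L + R)) * ((3 + 1 / ε) * (1 + δ * L) / B)) :=
        mul_le_mul_of_nonneg_left (hmain.trans hSQ)
          (by have := hlogn.trans_le hH; positivity)
    _ ≤ _ := by
        refine mul_le_mul_of_nonneg_right (one_div_le_one_div_of_le hlogn hH) (by positivity)
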